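/- arXiv:2108.12220 — 3 statements merged into one kernel-verified Lean document; each statement's English description precedes it below -/
import Mathlib

section
/- Let c, φ ∈ ℝ and define Ψ : (−∞,0) → ℝ by Ψ(x) := (2/3)·(−x/3^{1/3})^{3/2} − (3/4)·c·ln(−x/3^{1/3}) + φ. Then the improper integrals ∫_{−∞}^{x} cos(2Ψ(y))·(−y)^{−5/2} dy and ∫_{−∞}^{x} sin(Ψ(y))·(−y)^{−13/4} dy converge for every x < 0, and as x → −∞ one has ∫_{−∞}^{x} cos(2Ψ(y))·(−y)^{−5/2} dy = O((−x)^{−3}) and ∫_{−∞}^{x} sin(Ψ(y))·(−y)^{−13/4} dy = O((−x)^{−15/4}). -/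
/-!
After the reflection `t = -y` both integrals have the form `∫_T^∞ t^{-s} f(θ(t)) dt`, where `f` has
a bounded primitive `F` and `θ'(t) = α t^p + O(1/t)` with `p = 1/2`. Differentiating
`t^{-(s+p)} F(θ(t))` gives `α t^{-s} f(θ(t)) + O(t^{-(s+p)-1})`, so integrating over `(T, ∞)` bounds
`α ∫_T^∞ t^{-s} f(θ(t)) dt` by `O(T^{-(s+p)})`. Dividing by the constant `α` instead of by `θ'`
dispenses with `θ''` and with keeping away from the zeros of `θ'`.
-/

/-- The real cube root of 3. -/
noncomputable def cbrt3 : ℝ := (3 : ℝ) ^ ((1:ℝ)/3)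

open MeasureTheory Set Filter Topology

section PowerWeights

variable {E : Type*} [NormedAddCommGroup E] [NormedSpace ℝ E] {g : ℝ → E} {s T M : ℝ}

lemma integrableOn_Ioi_rpow_neg_smul_of_norm_le (hs : 1 < s) (hT : 0 < T)
    (hg : AEStronglyMeasurable g (volume.restrict (Ioi T))) (hM : ∀ t ∈ Ioi T, ‖g t‖ ≤ M) :
    IntegrableOn (fun t ↦ t ^ (-s) • g t) (Ioi T) :=
  (integrableOn_Ioi_rpow_of_lt (neg_lt_neg hs) hT).smul_bdd M hg
    (ae_restrict_of_forall_mem measurableSet_Ioi hM)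

lemma norm_integral_Ioi_rpow_neg_smul_le (hs : 1 < s) (hT : 0 < T)
    (hM : ∀ t ∈ Ioi T, ‖g t‖ ≤ M) :
    ‖∫ t in Ioi T, t ^ (-s) • g t‖ ≤ M / (s - 1) * T ^ (-(s - 1)) := by
  have hpow : IntegrableOn (fun t : ℝ ↦ t ^ (-s) * M) (Ioi T) :=
    (integrableOn_Ioi_rpow_of_lt (neg_lt_neg hs) hT).mul_const M
  calc ‖∫ t in Ioi T, t ^ (-s) • g t‖
      ≤ ∫ t in Ioi T, t ^ (-s) * M := by
        refine norm_integral_le_of_norm_le hpow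
          (ae_restrict_of_forall_mem measurableSet_Ioi fun t ht ↦ ?_)
        have hpos : 0 ≤ t ^ (-s) := Real.rpow_nonneg (hT.trans ht).le _
        rw [norm_smul, Real.norm_of_nonneg hpos]
        exact mul_le_mul_of_nonneg_left (hM t ht) hpos
    _ = M / (s - 1) * T ^ (-(s - 1)) := by
        rw [integral_mul_const, integral_Ioi_rpow_of_lt (neg_lt_neg hs) hT,
          show -s + 1 = -(s - 1) by ring, neg_div_neg_eq]
        ring

lemma tendsto_rpow_neg_smul_atTop_zero (hs : 0 < s) (hM : ∀ t, ‖g t‖ ≤ M) :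
    Tendsto (fun t : ℝ ↦ t ^ (-s) • g t) atTop (𝓝 0) :=
  (tendsto_rpow_neg_atTop hs).zero_smul_isBoundedUnder_le
    (isBoundedUnder_of ⟨M, hM⟩)

end PowerWeights

section IntegrationByParts

variable {E : Type*} [NormedAddCommGroup E] [NormedSpace ℝ E] {F f : ℝ → E} {θ : ℝ → ℝ}
  {α β p s t A B T : ℝ}

/-- The amplitude of the remainder in the integration by parts: the coefficient of
`t ^ (-(s + p + 1))` that is left when `α • t ^ (-s) • f (θ t)` is subtracted from the derivative of
`t ^ (-(s + p)) • F (θ t)`, where `F' = f`. -/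
noncomputable def remainderAmplitude (α p s : ℝ) (F f : ℝ → E) (θ : ℝ → ℝ) (t : ℝ) : E :=
  (t * (deriv θ t - α * t ^ p)) • f (θ t) - (s + p) • F (θ t)

lemma hasDerivAt_rpow_neg_smul_comp (ht : 0 < t) (hF : HasDerivAt F (f (θ t)) (θ t))
    (hθ : DifferentiableAt ℝ θ t) :
    HasDerivAt (fun t ↦ t ^ (-(s + p)) • F (θ t))
      (α • t ^ (-s) • f (θ t) + t ^ (-(s + p + 1)) • remainderAmplitude α p s F f θ t) t := by
  have hpow := Real.hasDerivAt_rpow_const (p := -(s + p)) (Or.inl ht.ne')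
  refine (hpow.smul (hF.scomp t hθ.hasDerivAt)).congr_deriv ?_
  have hexp : -(s + p) - 1 = -(s + p + 1) := by ring
  have hshift : t ^ (-(s + p)) = t ^ (-(s + p + 1)) * t := by
    rw [← Real.rpow_add_one ht.ne']; congr 1; ring
  have hsplit : t ^ (-s) = t ^ (-(s + p + 1)) * t * t ^ p := by
    rw [← hshift, ← Real.rpow_add ht]; congr 1; ring
  rw [remainderAmplitude, hexp, hsplit, hshift, Function.comp_apply]
  module

lemma norm_remainderAmplitude_le (ht : 0 < t) (hsp : 0 ≤ s + p) (hA : ‖F (θ t)‖ ≤ A)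
    (hB : ‖f (θ t)‖ ≤ B) (hdev : |deriv θ t - α * t ^ p| ≤ β / t) :
    ‖remainderAmplitude α p s F f θ t‖ ≤ β * B + (s + p) * A := by
  have hcoeff : |t * (deriv θ t - α * t ^ p)| ≤ β := by
    rwa [abs_mul, abs_of_pos ht, ← le_div_iff₀' ht]
  calc ‖remainderAmplitude α p s F f θ t‖
      ≤ |t * (deriv θ t - α * t ^ p)| * ‖f (θ t)‖ + (s + p) * ‖F (θ t)‖ := by
        refine (norm_sub_le _ _).trans_eq ?_
        rw [norm_smul, norm_smul, Real.norm_eq_abs, Real.norm_of_nonneg hsp]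
    _ ≤ β * B + (s + p) * A := by
        have hβ : 0 ≤ β := (abs_nonneg _).trans hcoeff
        gcongr

variable [CompleteSpace E]

lemma aestronglyMeasurable_comp_of_hasDerivAt {S : Set ℝ} (hF : ∀ u, HasDerivAt F (f u) u)
    (hS : MeasurableSet S) (hθ : ContinuousOn θ S) :
    AEStronglyMeasurable (fun t ↦ f (θ t)) (volume.restrict S) := by
  obtain rfl : deriv F = f := funext fun u ↦ (hF u).deriv
  exact (stronglyMeasurable_deriv F).aestronglyMeasurable.comp_aemeasurable (hθ.aemeasurable hS)

lemma integrableOn_Ioi_rpow_neg_smul_comp (hs : 1 < s) (hT : 0 < T)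
    (hF : ∀ u, HasDerivAt F (f u) u) (hB : ∀ u, ‖f u‖ ≤ B) (hθ : ContinuousOn θ (Ioi T)) :
    IntegrableOn (fun t ↦ t ^ (-s) • f (θ t)) (Ioi T) :=
  integrableOn_Ioi_rpow_neg_smul_of_norm_le hs hT
    (aestronglyMeasurable_comp_of_hasDerivAt hF measurableSet_Ioi hθ) fun t _ ↦ hB (θ t)

lemma aestronglyMeasurable_remainderAmplitude {S : Set ℝ} (hF : ∀ u, HasDerivAt F (f u) u)
    (hS : MeasurableSet S) (hθ : ContinuousOn θ S) :
    AEStronglyMeasurable (remainderAmplitude α p s F f θ) (volume.restrict S) := by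
  have hcoeff : Measurable fun t ↦ t * (deriv θ t - α * t ^ p) := by fun_prop
  have hFcont : Continuous F := continuous_iff_continuousAt.2 fun u ↦ (hF u).continuousAt
  exact (hcoeff.aestronglyMeasurable.smul (aestronglyMeasurable_comp_of_hasDerivAt hF hS hθ)).sub
    (((hFcont.comp_continuousOn hθ).aestronglyMeasurable hS).const_smul (s + p))

lemma smul_integral_Ioi_rpow_neg_smul_comp_eq (hs : 1 < s) (hsp : 0 < s + p) (hT : 0 < T)
    (hF : ∀ u, HasDerivAt F (f u) u) (hA : ∀ u, ‖F u‖ ≤ A) (hB : ∀ u, ‖f u‖ ≤ B)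
    (hθ : ∀ t ∈ Ici T, DifferentiableAt ℝ θ t)
    (hdev : ∀ t ∈ Ioi T, |deriv θ t - α * t ^ p| ≤ β / t) :
    α • ∫ t in Ioi T, t ^ (-s) • f (θ t) =
      -(T ^ (-(s + p)) • F (θ T)) -
        ∫ t in Ioi T, t ^ (-(s + p + 1)) • remainderAmplitude α p s F f θ t := by
  have hcont : ContinuousOn θ (Ioi T) := fun t ht ↦
    (hθ t (Ioi_subset_Ici_self ht)).continuousAt.continuousWithinAt
  have hmain := (integrableOn_Ioi_rpow_neg_smul_comp hs hT hF hB hcont).smul α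
  have hrem : IntegrableOn
      (fun t ↦ t ^ (-(s + p + 1)) • remainderAmplitude α p s F f θ t) (Ioi T) :=
    integrableOn_Ioi_rpow_neg_smul_of_norm_le (by linarith) hT
      (aestronglyMeasurable_remainderAmplitude hF measurableSet_Ioi hcont) fun t ht ↦
        norm_remainderAmplitude_le (hT.trans ht) hsp.le (hA _) (hB _) (hdev t ht)
  have hftc := integral_Ioi_of_hasDerivAt_of_tendsto'
    (fun t ht ↦ hasDerivAt_rpow_neg_smul_comp (hT.trans_le ht) (hF (θ t)) (hθ t ht))
    (hmain.add hrem) (tendsto_rpow_neg_smul_atTop_zero hsp fun t ↦ hA (θ t))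
  rw [← integral_smul, eq_sub_iff_add_eq, ← zero_sub (_ • _), ← hftc]
  exact (integral_add hmain hrem).symm

/-- Oscillation at frequency of order `t ^ p` improves the trivial bound `O(T ^ (1 - s))` by the
factor `T ^ (-(p + 1))`. -/
theorem norm_integral_Ioi_rpow_neg_smul_comp_le (hα : α ≠ 0) (hs : 1 < s) (hsp : 0 < s + p)
    (hT : 0 < T) (hF : ∀ u, HasDerivAt F (f u) u) (hA : ∀ u, ‖F u‖ ≤ A) (hB : ∀ u, ‖f u‖ ≤ B)
    (hθ : ∀ t ∈ Ici T, DifferentiableAt ℝ θ t)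
    (hdev : ∀ t ∈ Ioi T, |deriv θ t - α * t ^ p| ≤ β / t) :
    ‖∫ t in Ioi T, t ^ (-s) • f (θ t)‖ ≤ (2 * A + β * B / (s + p)) / |α| * T ^ (-(s + p)) := by
  have hboundary : ‖T ^ (-(s + p)) • F (θ T)‖ ≤ A * T ^ (-(s + p)) := by
    have hpos : 0 ≤ T ^ (-(s + p)) := Real.rpow_nonneg hT.le _
    rw [norm_smul, Real.norm_of_nonneg hpos, mul_comm]
    exact mul_le_mul_of_nonneg_right (hA _) hpos
  have hremainder : ‖∫ t in Ioi T, t ^ (-(s + p + 1)) • remainderAmplitude α p s F f θ t‖ ≤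
      (β * B + (s + p) * A) / (s + p) * T ^ (-(s + p)) := by
    simpa only [add_sub_cancel_right] using
      norm_integral_Ioi_rpow_neg_smul_le (by linarith : 1 < s + p + 1) hT fun t ht ↦
        norm_remainderAmplitude_le (hT.trans ht) hsp.le (hA _) (hB _) (hdev t ht)
  have hscaled : |α| * ‖∫ t in Ioi T, t ^ (-s) • f (θ t)‖ ≤
      (2 * A + β * B / (s + p)) * T ^ (-(s + p)) := by
    rw [← Real.norm_eq_abs, ← norm_smul,
      smul_integral_Ioi_rpow_neg_smul_comp_eq hs hsp hT hF hA hB hθ hdev]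
    calc _ ≤ A * T ^ (-(s + p)) + (β * B + (s + p) * A) / (s + p) * T ^ (-(s + p)) :=
          (norm_sub_le _ _).trans (add_le_add ((norm_neg _).trans_le hboundary) hremainder)
      _ = (2 * A + β * B / (s + p)) * T ^ (-(s + p)) := by
          field_simp
          ring
  rwa [div_mul_eq_mul_div, le_div_iff₀' (abs_pos.2 hα)]

end IntegrationByParts

section LeftHalfLine

variable {E : Type*} [NormedAddCommGroup E] [NormedSpace ℝ E] [CompleteSpace E]
  {F f : ℝ → E} {Ψ : ℝ → ℝ} {α β p s x A B : ℝ}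

lemma integrableOn_Iic_rpow_neg_smul_comp (hs : 1 < s) (hx : x < 0)
    (hF : ∀ u, HasDerivAt F (f u) u) (hB : ∀ u, ‖f u‖ ≤ B) (hΨ : ContinuousOn Ψ (Iio x)) :
    IntegrableOn (fun y ↦ (-y) ^ (-s) • f (Ψ y)) (Iic x) := by
  have hθ : ContinuousOn (fun t ↦ Ψ (-t)) (Ioi (-x)) :=
    hΨ.comp continuousOn_neg fun t (ht : -x < t) ↦ neg_lt.1 ht
  rw [integrableOn_Iic_iff_integrableOn_Iio]
  simpa only [neg_neg] using
    (integrableOn_Ioi_rpow_neg_smul_comp hs (neg_pos.2 hx) hF hB hθ).comp_neg_Iio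

theorem norm_integral_Iic_rpow_neg_smul_comp_le (hα : α ≠ 0) (hs : 1 < s)
    (hsp : 0 < s + p) (hx : x < 0) (hF : ∀ u, HasDerivAt F (f u) u) (hA : ∀ u, ‖F u‖ ≤ A)
    (hB : ∀ u, ‖f u‖ ≤ B) (hΨ : ∀ y ∈ Iic x, DifferentiableAt ℝ Ψ y)
    (hdev : ∀ y ∈ Iio x, |deriv Ψ y - α * (-y) ^ p| ≤ β / -y) :
    ‖∫ y in Iic x, (-y) ^ (-s) • f (Ψ y)‖ ≤
      (2 * A + β * B / (s + p)) / |α| * (-x) ^ (-(s + p)) := by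
  have hreflect := integral_comp_neg_Iic x fun t ↦ t ^ (-s) • f (Ψ (-t))
  simp only [neg_neg] at hreflect
  rw [hreflect, ← abs_neg α]
  refine norm_integral_Ioi_rpow_neg_smul_comp_le (neg_ne_zero.2 hα) hs hsp (neg_pos.2 hx) hF hA hB
    (fun t (ht : -x ≤ t) ↦ differentiableAt_comp_neg.2 (hΨ (-t) (neg_le.1 ht)))
    fun t (ht : -x < t) ↦ ?_
  have h := hdev (-t) (neg_lt.1 ht)
  rw [neg_neg] at h
  rwa [deriv_comp_neg, neg_mul, ← neg_sub', abs_neg]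

end LeftHalfLine

section Trigonometric

lemma hasDerivAt_sin_two_mul_div_two (u : ℝ) :
    HasDerivAt (fun u ↦ Real.sin (2 * u) / 2) (Real.cos (2 * u)) u := by
  simpa using ((hasDerivAt_id u).const_mul 2).sin.div_const 2

lemma abs_sin_two_mul_div_two_le (u : ℝ) : |Real.sin (2 * u) / 2| ≤ 1 / 2 := by
  rw [abs_div, abs_two]
  gcongr
  exact Real.abs_sin_le_one _

lemma hasDerivAt_neg_cos (u : ℝ) : HasDerivAt (-Real.cos) (Real.sin u) u := by
  simpa only [neg_neg] using (Real.hasDerivAt_cos u).neg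

lemma abs_neg_cos_le_one (u : ℝ) : |(-Real.cos) u| ≤ 1 :=
  (abs_neg _).trans_le (Real.abs_cos_le_one u)

end Trigonometric

section Phase

variable {k c φ x : ℝ} {Ψ : ℝ → ℝ}

/-- The phase of the oscillatory integrals on the left half-line, with an arbitrary length scale `k`
in place of `3^{1/3}`; it is only meaningful for `x < 0 < k`. -/
noncomputable def phase (k c φ x : ℝ) : ℝ :=
  2 / 3 * (-x / k) ^ ((3 : ℝ) / 2) - 3 / 4 * c * Real.log (-x / k) + φ

lemma hasDerivAt_phase (hk : 0 < k) (hx : x < 0) :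
    HasDerivAt (phase k c φ)
      (-(k ^ ((3 : ℝ) / 2))⁻¹ * (-x) ^ ((1 : ℝ) / 2) - 3 / 4 * c / x) x := by
  have hpos : 0 < -x / k := div_pos (neg_pos.2 hx) hk
  have hscale : HasDerivAt (fun y ↦ -y / k) (-1 / k) x := (hasDerivAt_neg x).div_const k
  have hpower := (hscale.rpow_const (p := 3 / 2) (Or.inl hpos.ne')).const_mul (2 / 3)
  have hlog := (hscale.log hpos.ne').const_mul (3 / 4 * c)
  refine ((hpower.sub hlog).add_const φ).congr_deriv ?_
  have hk32 : k ^ ((3 : ℝ) / 2) = k ^ ((1 : ℝ) / 2) * k := by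
    rw [← Real.rpow_add_one hk.ne']; norm_num
  rw [show (3 : ℝ) / 2 - 1 = 1 / 2 by norm_num, Real.div_rpow (neg_pos.2 hx).le hk.le, hk32]
  have hx0 : x ≠ 0 := hx.ne
  field_simp

lemma hasDerivAt_of_eqOn_phase (hk : 0 < k) (hΨ : EqOn Ψ (phase k c φ) (Iio 0)) (hx : x < 0) :
    HasDerivAt Ψ (-(k ^ ((3 : ℝ) / 2))⁻¹ * (-x) ^ ((1 : ℝ) / 2) - 3 / 4 * c / x) x :=
  (hasDerivAt_phase hk hx).congr_of_eventuallyEq (hΨ.eventuallyEq_of_mem (Iio_mem_nhds hx))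

lemma abs_deriv_sub_le_of_eqOn_phase (hk : 0 < k) (hΨ : EqOn Ψ (phase k c φ) (Iio 0))
    (hx : x < 0) :
    |deriv Ψ x - -(k ^ ((3 : ℝ) / 2))⁻¹ * (-x) ^ ((1 : ℝ) / 2)| ≤ |3 / 4 * c| / -x := by
  rw [(hasDerivAt_of_eqOn_phase hk hΨ hx).deriv, sub_sub_cancel_left, abs_neg, abs_div,
    abs_of_neg hx]

variable {F f : ℝ → ℝ} {s A B : ℝ}

lemma integrableOn_Iic_comp_mul_rpow_of_eqOn_phase (hk : 0 < k)
    (hΨ : EqOn Ψ (phase k c φ) (Iio 0)) (hs : 1 < s) (hF : ∀ u, HasDerivAt F (f u) u)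
    (hB : ∀ u, |f u| ≤ B) (hx : x < 0) :
    IntegrableOn (fun y ↦ f (Ψ y) * (-y) ^ (-s)) (Iic x) := by
  have hcont : ContinuousOn Ψ (Iio x) := fun y (hy : y < x) ↦
    (hasDerivAt_of_eqOn_phase hk hΨ (hy.trans hx)).continuousAt.continuousWithinAt
  simpa only [smul_eq_mul, mul_comm] using integrableOn_Iic_rpow_neg_smul_comp hs hx hF hB hcont

lemma abs_integral_Iic_comp_mul_rpow_le_of_eqOn_phase (hk : 0 < k)
    (hΨ : EqOn Ψ (phase k c φ) (Iio 0)) (hs : 1 < s) (hF : ∀ u, HasDerivAt F (f u) u)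
    (hA : ∀ u, |F u| ≤ A) (hB : ∀ u, |f u| ≤ B) (hx : x < 0) :
    |∫ y in Iic x, f (Ψ y) * (-y) ^ (-s)| ≤
      (2 * A + |3 / 4 * c| * B / (s + 1 / 2)) * k ^ ((3 : ℝ) / 2) * (-x) ^ (-(s + 1 / 2)) := by
  have hα : 0 < (k ^ ((3 : ℝ) / 2))⁻¹ := by positivity
  have hbound := norm_integral_Iic_rpow_neg_smul_comp_le (neg_ne_zero.2 hα.ne') hs
    (by linarith) hx hF hA hB
    (fun y hy ↦ (hasDerivAt_of_eqOn_phase hk hΨ (hy.trans_lt hx)).differentiableAt)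
    fun y hy ↦ abs_deriv_sub_le_of_eqOn_phase hk hΨ (hy.trans hx)
  rw [abs_neg, abs_of_pos hα, div_inv_eq_mul] at hbound
  simpa only [smul_eq_mul, mul_comm (f _), Real.norm_eq_abs] using hbound

end Phase

/-- Oscillatory integral estimates: for the phase
`Ψ(x) = (2/3)(-x/3^{1/3})^{3/2} - (3/4) c ln(-x/3^{1/3}) + φ`, the improper integrals
`∫_{-∞}^x cos(2Ψ(y))(-y)^{-5/2} dy` and `∫_{-∞}^x sin(Ψ(y))(-y)^{-13/4} dy` converge for
every `x < 0`, and are `O((-x)^{-3})` resp. `O((-x)^{-15/4})` as `x → -∞`. -/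
theorem stmt_11 (c φ : ℝ) (Ψ : ℝ → ℝ)
    (hΨ : ∀ x : ℝ, x < 0 → Ψ x =
      2/3 * ((-x) / cbrt3) ^ ((3:ℝ)/2) - 3/4 * c * Real.log ((-x) / cbrt3) + φ) :
    (∀ x : ℝ, x < 0 → MeasureTheory.IntegrableOn
      (fun y : ℝ => Real.cos (2 * Ψ y) * (-y) ^ (-(5:ℝ)/2)) (Set.Iic x)) ∧
    (∀ x : ℝ, x < 0 → MeasureTheory.IntegrableOn
      (fun y : ℝ => Real.sin (Ψ y) * (-y) ^ (-(13:ℝ)/4)) (Set.Iic x)) ∧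
    (∃ x₁ : ℝ, 0 < x₁ ∧ ∃ K : ℝ, 0 < K ∧ ∀ x : ℝ, x ≤ -x₁ →
      |∫ y in Set.Iic x, Real.cos (2 * Ψ y) * (-y) ^ (-(5:ℝ)/2)|
        ≤ K * (-x) ^ (-(3:ℝ))) ∧
    (∃ x₁ : ℝ, 0 < x₁ ∧ ∃ K : ℝ, 0 < K ∧ ∀ x : ℝ, x ≤ -x₁ →
      |∫ y in Set.Iic x, Real.sin (Ψ y) * (-y) ^ (-(13:ℝ)/4)|
        ≤ K * (-x) ^ (-(15:ℝ)/4)) := by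
  have hk : 0 < cbrt3 := Real.rpow_pos_of_pos three_pos _
  have hphase : EqOn Ψ (phase cbrt3 c φ) (Iio 0) := hΨ
  have hcos_le (u : ℝ) : |Real.cos (2 * u)| ≤ 1 := Real.abs_cos_le_one _
  have hcos_int (x : ℝ) (hx : x < 0) := integrableOn_Iic_comp_mul_rpow_of_eqOn_phase
    (s := 5 / 2) hk hphase (by norm_num) hasDerivAt_sin_two_mul_div_two hcos_le hx
  have hsin_int (x : ℝ) (hx : x < 0) := integrableOn_Iic_comp_mul_rpow_of_eqOn_phase
    (s := 13 / 4) hk hphase (by norm_num) hasDerivAt_neg_cos Real.abs_sin_le_one hx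
  have hcos_bound (x : ℝ) (hx : x ≤ -1) := abs_integral_Iic_comp_mul_rpow_le_of_eqOn_phase
    (s := 5 / 2) hk hphase (by norm_num) hasDerivAt_sin_two_mul_div_two abs_sin_two_mul_div_two_le
    hcos_le (hx.trans_lt neg_one_lt_zero)
  have hsin_bound (x : ℝ) (hx : x ≤ -1) := abs_integral_Iic_comp_mul_rpow_le_of_eqOn_phase
    (s := 13 / 4) hk hphase (by norm_num) hasDerivAt_neg_cos abs_neg_cos_le_one
    Real.abs_sin_le_one (hx.trans_lt neg_one_lt_zero)
  rw [neg_div, neg_div, show -(3 : ℝ) = -(5 / 2 + 1 / 2) by norm_num,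
    show -(15 : ℝ) / 4 = -(13 / 4 + 1 / 2) by norm_num]
  exact ⟨hcos_int, hsin_int, ⟨1, one_pos, _, by positivity, hcos_bound⟩,
    ⟨1, one_pos, _, by positivity, hsin_bound⟩⟩
end

section
/- Let μ ∈ ℝ, set α := −iμ/2, and let u : ℝ → ℂ be a smooth solution of the PII equation u''(x) = x·u(x) + 2·u(x)³ − α on ℝ, taking purely imaginary values on ℝ and satisfying the asymptotic expansion (A−): there exist d ∈ iℝ, φ ∈ ℝ and x₀, K > 0 such that |u(x) − α/x − d·(−x)^{−1/4}·sin( (2/3)(−x)^{3/2} − (3/4)·d²·ln(−x) + φ )| ≤ K·(−x)^{−7/4} for all x ≤ −x₀. Define w(x) := ∫₀ˣ exp( (2/3^{1/3}) ∫₀^y u(z/3^{1/3}) dz ) dy − C with C := (2·3^{1/3}/(1−iμ))·(u'(0) − u(0)²), and g(x) := e^{iμ·ln|x|}·w(x)/x for x ≠ 0. Then there exists g₋ ∈ ℂ such that lim_{x→−∞} g(x) = g₋ and w'(x)·e^{iμ·ln|x|} = (1−iμ)·g₋ + O((−x)^{−3/4}) as x → −∞. -/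
/-!
Put `t = -x`. Up to `O(t ^ (-7/4))`, the function `u (-t)` is `-α / t` plus a multiple of
`t ^ (-1/4) * sin θ(t)`, where `θ(t) = 2/3 * t ^ (3/2) + k * log t + φ` is real because `d` is
imaginary. Since `(t ^ (-3/4) * cos θ)' = -t ^ (-1/4) * sin θ + O(t ^ (-7/4))`, the oscillation
contributes only `O(t ^ (-3/4))` to the integral of `u`, so that
`2 ∫₀^{-t} u + iμ log t = L + O(t ^ (-3/4))`. As `w'(x) = exp (2 ∫₀^{x / 3^{1/3}} u)`,
exponentiating gives `w'(x) e^{iμ log |x|} = P + O((-x) ^ (-3/4))` for a constant `P`. Thus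
`w(-t) + P / (1 - iμ) * t ^ (1 - iμ)` has a derivative tending to zero and is `o(t)`, which is
`g → P / (1 - iμ)`.
-/

open Asymptotics Filter Set Topology

section DerivativeAtInfinity

lemma isBigO_atBot_neg_rpow_iff {E : Type*} [Norm E] {f : ℝ → E} {p : ℝ} :
    f =O[atBot] (fun x => (-x) ^ p) ↔
      ∃ x₀ : ℝ, 0 < x₀ ∧ ∃ K : ℝ, 0 < K ∧ ∀ x, x ≤ -x₀ → ‖f x‖ ≤ K * (-x) ^ p := by
  have norm_neg_rpow {x : ℝ} (hx : x ≤ 0) : ‖(-x) ^ p‖ = (-x) ^ p :=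
    Real.norm_of_nonneg (Real.rpow_nonneg (neg_nonneg.2 hx) p)
  constructor
  · intro h
    obtain ⟨K, hK, hfK⟩ := h.exists_pos
    obtain ⟨a, ha⟩ := eventually_atBot.1 hfK.bound
    refine ⟨max 1 (-a), by positivity, K, hK, fun x hx => ?_⟩
    have hx0 : x ≤ 0 := by linarith [le_max_left 1 (-a)]
    simpa only [norm_neg_rpow hx0] using ha x (by linarith [le_max_right 1 (-a)])
  · rintro ⟨x₀, hx₀, K, -, h⟩
    refine .of_bound K ?_
    filter_upwards [eventually_le_atBot (-x₀)] with x hx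
    simpa only [norm_neg_rpow (by linarith : x ≤ 0)] using h x hx

variable {E : Type*} [NormedAddCommGroup E] [NormedSpace ℝ E] {f f' : ℝ → E}

lemma norm_sub_le_sub_of_norm_deriv_le_deriv {B B' : ℝ → ℝ} {s t : ℝ} (hst : s ≤ t)
    (hf : ∀ x ∈ Icc s t, HasDerivAt f (f' x) x) (hB : ∀ x ∈ Icc s t, HasDerivAt B (B' x) x)
    (hle : ∀ x ∈ Ico s t, ‖f' x‖ ≤ B' x) : ‖f t - f s‖ ≤ B t - B s := by
  have hf_sub (x) (hx : x ∈ Icc s t) := (hf x hx).sub_const (f s)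
  have hB_sub (x) (hx : x ∈ Icc s t) := (hB x hx).sub_const (B s)
  exact image_norm_le_of_norm_deriv_right_le_deriv_boundary'
    (f := fun x => f x - f s) (B := fun x => B x - B s)
    (fun x hx => (hf_sub x hx).continuousAt.continuousWithinAt)
    (fun x hx => (hf_sub x (Ico_subset_Icc_self hx)).hasDerivWithinAt) (by simp)
    (fun x hx => (hB_sub x hx).continuousAt.continuousWithinAt)
    (fun x hx => (hB_sub x (Ico_subset_Icc_self hx)).hasDerivWithinAt) hle ⟨hst, le_rfl⟩

lemma exists_norm_sub_le_of_norm_deriv_le_neg_deriv [CompleteSpace E] {B B' : ℝ → ℝ} {T : ℝ}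
    (hf : ∀ t, T ≤ t → HasDerivAt f (f' t) t) (hB : ∀ t, T ≤ t → HasDerivAt B (B' t) t)
    (hle : ∀ t, T ≤ t → ‖f' t‖ ≤ -B' t) (hB0 : Tendsto B atTop (𝓝 0)) :
    ∃ L : E, ∀ t, T ≤ t → ‖f t - L‖ ≤ B t := by
  have increment_le {s t : ℝ} (hs : T ≤ s) (hst : s ≤ t) : ‖f t - f s‖ ≤ B s - B t := by
    have h := norm_sub_le_sub_of_norm_deriv_le_deriv hst (fun x hx => hf x (hs.trans hx.1))
      (fun x hx => (hB x (hs.trans hx.1)).neg) (fun x hx => hle x (hs.trans hx.1))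
    simpa only [Pi.neg_apply, neg_sub_neg] using h
  have hcauchy : CauchySeq f := Metric.cauchySeq_iff'.2 fun ε hε => by
    obtain ⟨N, hN⟩ := Metric.cauchySeq_iff.1 hB0.cauchySeq ε hε
    refine ⟨max N T, fun t ht => ?_⟩
    calc dist (f t) (f (max N T)) ≤ B (max N T) - B t := by
          simpa only [dist_eq_norm] using increment_le (le_max_right N T) ht
      _ ≤ dist (B (max N T)) (B t) := le_abs_self _
      _ < ε := hN _ (le_max_left N T) _ ((le_max_left N T).trans ht)
  obtain ⟨L, hL⟩ := cauchySeq_tendsto_of_complete hcauchy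
  refine ⟨L, fun s hs => ?_⟩
  rw [norm_sub_rev, ← sub_zero (B s)]
  refine le_of_tendsto_of_tendsto (hL.sub_const (f s)).norm (hB0.const_sub (B s)) ?_
  filter_upwards [eventually_ge_atTop s] with t ht using increment_le hs ht

lemma exists_sub_isBigO_rpow_of_deriv_isBigO_rpow [CompleteSpace E] {p : ℝ} (hp : p < -1)
    (hf : ∀ᶠ t in atTop, HasDerivAt f (f' t) t) (hf' : f' =O[atTop] (· ^ p)) :
    ∃ L : E, (fun t => f t - L) =O[atTop] (· ^ (p + 1)) := by
  obtain ⟨K, hK⟩ := hf'.bound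
  obtain ⟨T, hT⟩ := eventually_atTop.1 ((hf.and hK).and (eventually_gt_atTop 0))
  have hp' : p + 1 ≠ 0 := by linarith
  have hB (t) (ht : T ≤ t) :
      HasDerivAt (fun t => -K / (p + 1) * t ^ (p + 1)) (-(K * t ^ p)) t := by
    refine ((Real.hasDerivAt_rpow_const (p := p + 1) (.inl (hT t ht).2.ne')).const_mul
      (-K / (p + 1))).congr_deriv ?_
    rw [add_sub_cancel_right]
    field_simp
  have hB0 : Tendsto (fun t : ℝ => -K / (p + 1) * t ^ (p + 1)) atTop (𝓝 0) := by
    simpa using (tendsto_rpow_neg_atTop (y := -(p + 1)) (by linarith)).const_mul (-K / (p + 1))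
  have hle (t) (ht : T ≤ t) : ‖f' t‖ ≤ -(-(K * t ^ p)) := by
    simpa only [neg_neg, Real.norm_of_nonneg (Real.rpow_nonneg (hT t ht).2.le _)]
      using (hT t ht).1.2
  obtain ⟨L, hL⟩ := exists_norm_sub_le_of_norm_deriv_le_neg_deriv
    (fun t ht => (hT t ht).1.1) hB hle hB0
  refine ⟨L, .of_bound (-K / (p + 1)) ?_⟩
  filter_upwards [eventually_ge_atTop T] with t ht
  simpa only [Real.norm_of_nonneg (Real.rpow_nonneg (hT t ht).2.le _)] using hL t ht

lemma isLittleO_id_of_deriv_tendsto_zero (hf : ∀ᶠ t in atTop, HasDerivAt f (f' t) t)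
    (hf' : Tendsto f' atTop (𝓝 0)) : f =o[atTop] (id : ℝ → ℝ) := by
  refine isLittleO_iff.2 fun c hc => ?_
  have hsmall : ∀ᶠ t in atTop, ‖f' t‖ ≤ c / 2 :=
    hf'.norm.eventually_le_const (by simpa using half_pos hc)
  obtain ⟨T, hT⟩ := eventually_atTop.1 ((hf.and hsmall).and (eventually_ge_atTop 0))
  filter_upwards [eventually_ge_atTop T,
    (isLittleO_const_id_atTop (f T)).bound (half_pos hc)] with t ht hfT
  have hincr : ‖f t - f T‖ ≤ c / 2 * t - c / 2 * T :=
    norm_sub_le_sub_of_norm_deriv_le_deriv ht (fun x hx => (hT x hx.1).1.1)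
      (fun x _ => by simpa using (hasDerivAt_id x).const_mul (c / 2))
      (fun x hx => (hT x hx.1).1.2)
  have hT0 : 0 ≤ c / 2 * T := mul_nonneg (half_pos hc).le (hT T le_rfl).2
  rw [id, Real.norm_of_nonneg (hT t ht).2] at hfT ⊢
  linarith [norm_le_norm_add_norm_sub' (f t) (f T)]

end DerivativeAtInfinity

section Oscillation

/-- The phase `2/3 * t ^ (3/2) + k * log t + φ` of the oscillation of a Painlevé II solution at
`x = -t`; `k` is the coefficient of the logarithmic phase shift. -/
noncomputable def painlevePhase (k φ t : ℝ) : ℝ := 2 / 3 * t ^ (3 / 2 : ℝ) + k * Real.log t + φ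

lemma hasDerivAt_painlevePhase (k φ : ℝ) {t : ℝ} (ht : t ≠ 0) :
    HasDerivAt (painlevePhase k φ) (t ^ (1 / 2 : ℝ) + k * t⁻¹) t := by
  have hpow := (Real.hasDerivAt_rpow_const (p := 3 / 2) (.inl ht)).const_mul (2 / 3)
  refine ((hpow.add ((Real.hasDerivAt_log ht).const_mul k)).add_const φ).congr_deriv ?_
  norm_num [← mul_assoc]

lemma hasDerivAt_rpow_mul_cos_painlevePhase (k φ p : ℝ) {t : ℝ} (ht : 0 < t) :
    HasDerivAt (fun t => t ^ (p - 1 / 2) * Real.cos (painlevePhase k φ t))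
      (-(t ^ p * Real.sin (painlevePhase k φ t)) + t ^ (p - 3 / 2) *
        ((p - 1 / 2) * Real.cos (painlevePhase k φ t) - k * Real.sin (painlevePhase k φ t))) t := by
  have hpow := Real.hasDerivAt_rpow_const (p := p - 1 / 2) (.inl ht.ne')
  refine (hpow.mul (hasDerivAt_painlevePhase k φ ht.ne').cos).congr_deriv ?_
  have h_main : t ^ (p - 1 / 2) * t ^ (1 / 2 : ℝ) = t ^ p := by
    rw [← Real.rpow_add ht, sub_add_cancel]
  have h_error : t ^ (p - 1 / 2) * t⁻¹ = t ^ (p - 3 / 2) := by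
    rw [← Real.rpow_neg_one, ← Real.rpow_add ht]
    ring_nf
  have h_sub_one : t ^ (p - 1 / 2 - 1) = t ^ (p - 3 / 2) := by ring_nf
  rw [h_sub_one, ← h_main, ← h_error]
  ring

lemma isBigO_rpow_mul_cos_sub_sin (a b p : ℝ) (θ : ℝ → ℝ) (l : Filter ℝ) :
    (fun t => t ^ p * (a * Real.cos (θ t) - b * Real.sin (θ t))) =O[l] (· ^ p) := by
  have hcos : (fun t => Real.cos (θ t)) =O[l] (fun _ => (1 : ℝ)) :=
    .of_norm_le fun t => Real.abs_cos_le_one (θ t)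
  have hsin : (fun t => Real.sin (θ t)) =O[l] (fun _ => (1 : ℝ)) :=
    .of_norm_le fun t => Real.abs_sin_le_one (θ t)
  simpa only [mul_one] using
    (isBigO_refl _ l).mul ((hcos.const_mul_left a).sub (hsin.const_mul_left b))

lemma exists_antideriv_sub_log_sub_isBigO_rpow {V v : ℝ → ℂ} {a b : ℂ} {k φ p : ℝ}
    (hp : p < 1 / 2) (hV : ∀ᶠ t in atTop, HasDerivAt V (v t) t)
    (hv : (fun t : ℝ => v t - a / t - b * (t ^ p * Real.sin (painlevePhase k φ t) : ℝ))
      =O[atTop] (· ^ (p - 3 / 2))) :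
    ∃ L : ℂ, (fun t => V t - a * Real.log t - L) =O[atTop] (· ^ (p - 1 / 2)) := by
  set C : ℝ → ℝ := fun t => t ^ (p - 1 / 2) * Real.cos (painlevePhase k φ t)
  set R : ℝ → ℝ := fun t => t ^ (p - 3 / 2) *
    ((p - 1 / 2) * Real.cos (painlevePhase k φ t) - k * Real.sin (painlevePhase k φ t))
  have hR : (fun t => (R t : ℂ)) =O[atTop] (· ^ (p - 3 / 2)) :=
    Complex.isBigO_ofReal_left.2 (isBigO_rpow_mul_cos_sub_sin ..)
  have hC : (fun t => (C t : ℂ)) =O[atTop] (· ^ (p - 1 / 2)) :=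
    Complex.isBigO_ofReal_left.2 <| by
      simpa [C] using isBigO_rpow_mul_cos_sub_sin 1 0 (p - 1 / 2) (painlevePhase k φ) atTop
  have hderiv : ∀ᶠ t in atTop, HasDerivAt (fun t => V t - a * Real.log t + b * C t)
      (v t - a / t - b * (t ^ p * Real.sin (painlevePhase k φ t) : ℝ) + b * R t) t := by
    filter_upwards [hV, eventually_gt_atTop 0] with t hVt ht
    have hlog := (Real.hasDerivAt_log ht.ne').ofReal_comp
    have hosc := (hasDerivAt_rpow_mul_cos_painlevePhase k φ p ht).ofReal_comp
    refine ((hVt.sub (hlog.const_mul a)).add (hosc.const_mul b)).congr_deriv ?_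
    simp only [R]
    push_cast
    ring
  obtain ⟨L, hL⟩ := exists_sub_isBigO_rpow_of_deriv_isBigO_rpow (by linarith) hderiv
    (hv.add (hR.const_mul_left b))
  rw [show p - 3 / 2 + 1 = p - 1 / 2 by ring] at hL
  exact ⟨L, (hL.sub (hC.const_mul_left b)).congr_left fun t => by ring⟩

end Oscillation

section LogarithmicFactor

lemma isBigO_rpow_comp_div {E : Type*} [Norm E] {f : ℝ → E} {p c : ℝ} (hc : 0 < c)
    (hf : f =O[atTop] (· ^ p)) : (fun t => f (t / c)) =O[atTop] (· ^ p) := by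
  refine (hf.comp_tendsto (tendsto_id.atTop_div_const hc)).trans (.of_bound (c ^ p)⁻¹ ?_)
  filter_upwards [eventually_ge_atTop 0] with t ht
  simp only [Function.comp_apply, id]
  rw [Real.div_rpow ht hc.le, norm_div, Real.norm_of_nonneg (Real.rpow_nonneg hc.le p),
    div_eq_inv_mul]

lemma isBigO_exp_sub_exp {ι : Type*} {l : Filter ι} {V : ι → ℂ} {L : ℂ} {h : ι → ℝ}
    (hV : (fun t => V t - L) =O[l] h) (hh : Tendsto h l (𝓝 0)) :
    (fun t => Complex.exp (V t) - Complex.exp L) =O[l] h :=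
  have hVL : Tendsto V l (𝓝 L) := tendsto_sub_nhds_zero_iff.1 (hV.trans_tendsto hh)
  ((Complex.hasDerivAt_exp L).isBigO_sub.comp_tendsto hVL).trans hV

lemma isBigO_exp_comp_div_mul_exp_log_sub {V : ℝ → ℂ} {β L : ℂ} {p c : ℝ} (hp : p < 0)
    (hc : 0 < c) (hV : (fun t => V t + β * Real.log t - L) =O[atTop] (· ^ p)) :
    (fun t => Complex.exp (V (t / c)) * Complex.exp (β * Real.log t)
      - Complex.exp (L + β * Real.log c)) =O[atTop] (· ^ p) := by
  have hpow : Tendsto (fun t : ℝ => t ^ p) atTop (𝓝 0) := by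
    simpa using tendsto_rpow_neg_atTop (y := -p) (by linarith)
  have hexponent : (fun t => V (t / c) + β * Real.log t - (L + β * Real.log c))
      =O[atTop] (· ^ p) := by
    refine (isBigO_rpow_comp_div hc hV).congr' ?_ .rfl
    filter_upwards [eventually_ne_atTop 0] with t ht
    rw [Real.log_div ht hc.ne']
    push_cast
    ring
  simpa only [Complex.exp_add] using isBigO_exp_sub_exp hexponent hpow

lemma norm_exp_I_mul_ofReal_mul_ofReal (μ s : ℝ) : ‖Complex.exp (Complex.I * μ * s)‖ = 1 := by
  rw [mul_assoc, ← Complex.ofReal_mul, Complex.norm_exp_I_mul_ofReal]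

lemma one_sub_I_mul_ofReal_ne_zero (μ : ℝ) : 1 - Complex.I * μ ≠ 0 :=
  fun h => by simpa using congrArg Complex.re h

/-- The function `t * exp (-(I * μ * log t))` is `t ^ (1 - iμ)`. -/
lemma hasDerivAt_mul_exp_neg_I_mul_log (μ : ℝ) {t : ℝ} (ht : t ≠ 0) :
    HasDerivAt (fun t : ℝ => (t : ℂ) * Complex.exp (-(Complex.I * μ * Real.log t)))
      ((1 - Complex.I * μ) * Complex.exp (-(Complex.I * μ * Real.log t))) t := by
  have hlog := ((Real.hasDerivAt_log ht).ofReal_comp.const_mul (Complex.I * μ)).neg.cexp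
  refine ((hasDerivAt_id t).ofReal_comp.mul hlog).congr_deriv ?_
  have htC : (t : ℂ) ≠ 0 := mod_cast ht
  simp only [id, Pi.neg_apply]
  push_cast
  field_simp
  ring

lemma tendsto_exp_I_mul_log_mul_div {f f' : ℝ → ℂ} {μ : ℝ} {P : ℂ}
    (hf : ∀ᶠ t in atTop, HasDerivAt f (f' t) t)
    (hf' : Tendsto (fun t => f' t * Complex.exp (Complex.I * μ * Real.log t)) atTop (𝓝 P)) :
    Tendsto (fun t => Complex.exp (Complex.I * μ * Real.log t) * f t / t) atTop
      (𝓝 (P / (1 - Complex.I * μ))) := by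
  set Q := P / (1 - Complex.I * μ)
  have hP : Q * (1 - Complex.I * μ) = P := div_mul_cancel₀ P (one_sub_I_mul_ofReal_ne_zero μ)
  set D : ℝ → ℂ := fun t => f t - Q * (t * Complex.exp (-(Complex.I * μ * Real.log t))) with hD
  have hD_deriv : ∀ᶠ t in atTop,
      HasDerivAt D (f' t - P * Complex.exp (-(Complex.I * μ * Real.log t))) t := by
    filter_upwards [hf, eventually_ne_atTop 0] with t hft ht
    refine (hft.sub ((hasDerivAt_mul_exp_neg_I_mul_log μ ht).const_mul Q)).congr_deriv ?_
    rw [← mul_assoc, hP]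
  have hD_deriv_zero :
      Tendsto (fun t => f' t - P * Complex.exp (-(Complex.I * μ * Real.log t))) atTop (𝓝 0) := by
    refine squeeze_zero_norm (fun t => le_of_eq ?_) (tendsto_iff_norm_sub_tendsto_zero.1 hf')
    rw [← mul_one ‖_ - _‖, ← norm_exp_I_mul_ofReal_mul_ofReal μ (Real.log t), ← norm_mul, sub_mul,
      mul_assoc P, ← Complex.exp_add, neg_add_cancel, Complex.exp_zero, mul_one]
  have hD_div : Tendsto (fun t => ‖D t‖ / t) atTop (𝓝 0) :=
    (isLittleO_id_of_deriv_tendsto_zero hD_deriv hD_deriv_zero).norm_left.tendsto_div_nhds_zero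
  refine tendsto_iff_norm_sub_tendsto_zero.2 (hD_div.congr' ?_)
  filter_upwards [eventually_gt_atTop 0] with t ht
  have htC : (t : ℂ) ≠ 0 := mod_cast ht.ne'
  have hsplit : Complex.exp (Complex.I * μ * Real.log t) * f t / t - Q
      = Complex.exp (Complex.I * μ * Real.log t) * D t / t := by
    have := Complex.exp_ne_zero (Complex.I * μ * Real.log t)
    simp only [hD, Complex.exp_neg]
    field_simp
  rw [hsplit, norm_div, norm_mul, norm_exp_I_mul_ofReal_mul_ofReal, one_mul, Complex.norm_real,
    Real.norm_of_nonneg ht.le]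

lemma tendsto_exp_I_mul_log_abs_mul_div_atBot {f f' : ℝ → ℂ} {μ : ℝ} {P : ℂ}
    (hf : ∀ᶠ x in atBot, HasDerivAt f (f' x) x)
    (hf' : Tendsto (fun x => f' x * Complex.exp (Complex.I * μ * Real.log |x|)) atBot (𝓝 P)) :
    Tendsto (fun x => Complex.exp (Complex.I * μ * Real.log |x|) * f x / x) atBot
      (𝓝 (P / (1 - Complex.I * μ))) := by
  have hderiv : ∀ᶠ t in atTop, HasDerivAt (fun t => -f (-t)) (f' (-t)) t := by
    filter_upwards [tendsto_neg_atTop_atBot.eventually hf] with t ht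
    simpa [Function.comp_def, Pi.neg_def] using (ht.scomp t (hasDerivAt_neg t)).neg
  have hlim :
      Tendsto (fun t => f' (-t) * Complex.exp (Complex.I * μ * Real.log t)) atTop (𝓝 P) := by
    simpa [Function.comp_def] using hf'.comp tendsto_neg_atTop_atBot
  simpa [Function.comp_def] using
    (tendsto_exp_I_mul_log_mul_div hderiv hlim).comp tendsto_neg_atBot_atTop

end LogarithmicFactor

section PainleveTail

variable {u : ℝ → ℂ}

lemma sin_eq_ofReal_sin_painlevePhase {d : ℂ} (hd : d.re = 0) (φ t : ℝ) :
    Complex.sin (((2/3 * t ^ ((3:ℝ)/2) : ℝ) : ℂ) - 3/4 * d ^ 2 * (Real.log t : ℂ) + (φ : ℂ))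
      = (Real.sin (painlevePhase (3 / 4 * d.im ^ 2) φ t) : ℝ) := by
  have hd_sq : d ^ 2 = -(d.im : ℂ) ^ 2 := by
    rw [← Complex.re_add_im d, hd]
    simp [mul_pow]
  rw [hd_sq, painlevePhase]
  push_cast
  ring_nf

lemma exists_integral_neg_sub_log_sub_isBigO {α d : ℂ} {φ : ℝ} (hu : Continuous u)
    (hd : d.re = 0)
    (hA : (fun x : ℝ => u x - α / x - d * (((-x) ^ (-(1:ℝ)/4) : ℝ) : ℂ) *
        Complex.sin (((2/3 * (-x) ^ ((3:ℝ)/2) : ℝ) : ℂ)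
          - 3/4 * d ^ 2 * (Real.log (-x) : ℂ) + (φ : ℂ)))
      =O[atBot] fun x => (-x) ^ (-(7:ℝ)/4)) :
    ∃ L : ℂ, (fun t : ℝ => (∫ z in (0:ℝ)..(-t), u z) - α * Real.log t - L)
      =O[atTop] (· ^ (-(3:ℝ)/4)) := by
  have hderiv (t : ℝ) : HasDerivAt (fun t : ℝ => ∫ z in (0:ℝ)..(-t), u z) (-u (-t)) t := by
    simpa [Function.comp_def] using
      (hu.integral_hasStrictDerivAt 0 (-t)).hasDerivAt.scomp t (hasDerivAt_neg t)
  have htail : (fun t : ℝ => -u (-t) - α / t - -d * (t ^ (-1 / 4 : ℝ) *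
      Real.sin (painlevePhase (3 / 4 * d.im ^ 2) φ t) : ℝ))
      =O[atTop] (· ^ (-1 / 4 - 3 / 2 : ℝ)) := by
    refine (hA.comp_tendsto tendsto_neg_atTop_atBot).neg_left.congr (fun t => ?_) fun t => ?_
    · simp only [Function.comp_apply, neg_neg, sin_eq_ofReal_sin_painlevePhase hd]
      push_cast
      ring
    · norm_num
  obtain ⟨L, hL⟩ :=
    exists_antideriv_sub_log_sub_isBigO_rpow (by norm_num) (.of_forall hderiv) htail
  exact ⟨L, by convert hL using 3; norm_num⟩

lemma hasDerivAt_integral_exp_integral_comp_div (hu : Continuous u) {c : ℝ} (hc : c ≠ 0)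
    (x : ℝ) :
    HasDerivAt (fun x => ∫ y in (0:ℝ)..x, Complex.exp (((2 / c : ℝ) : ℂ) *
        ∫ z in (0:ℝ)..y, u (z / c)))
      (Complex.exp (2 * ∫ z in (0:ℝ)..(x / c), u z)) x := by
  have hrescale (y : ℝ) : ((2 / c : ℝ) : ℂ) * ∫ z in (0:ℝ)..y, u (z / c)
      = 2 * ∫ z in (0:ℝ)..(y / c), u z := by
    have hcC : (c : ℂ) ≠ 0 := mod_cast hc
    rw [intervalIntegral.integral_comp_div u hc, zero_div, Complex.real_smul]
    push_cast
    field_simp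
  have hprimitive : Continuous fun s : ℝ => ∫ z in (0:ℝ)..s, u z :=
    intervalIntegral.continuous_primitive (fun a b => hu.intervalIntegrable a b) 0
  have hintegrand : Continuous fun y : ℝ => Complex.exp (2 * ∫ z in (0:ℝ)..(y / c), u z) :=
    ((hprimitive.comp (continuous_id.div_const c)).const_mul 2).cexp
  simp only [hrescale]
  exact (hintegrand.integral_hasStrictDerivAt 0 x).hasDerivAt

end PainleveTail

theorem stmt_12_general (μ : ℝ) (α : ℂ) (hα : α = -Complex.I * μ / 2)
    (u : ℝ → ℂ) (hu : Continuous u) (d : ℂ) (hd : d.re = 0) (φ : ℝ)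
    (hA : (fun x : ℝ => u x - α / x - d * (((-x) ^ (-(1:ℝ)/4) : ℝ) : ℂ) *
        Complex.sin (((2/3 * (-x) ^ ((3:ℝ)/2) : ℝ) : ℂ)
          - 3/4 * d ^ 2 * (Real.log (-x) : ℂ) + (φ : ℂ)))
      =O[atBot] fun x => (-x) ^ (-(7:ℝ)/4))
    (c : ℝ) (hc : 0 < c) (C : ℂ) (w : ℝ → ℂ)
    (hw : ∀ x : ℝ, w x =
      (∫ y in (0:ℝ)..x, Complex.exp (((2 / c : ℝ) : ℂ) * ∫ z in (0:ℝ)..y, u (z / c))) - C)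
    (g : ℝ → ℂ)
    (hg : ∀ x : ℝ, x ≠ 0 → g x = Complex.exp (Complex.I * μ * Real.log |x|) * w x / x) :
    ∃ gm : ℂ, Tendsto g atBot (𝓝 gm) ∧
      (fun x : ℝ => deriv w x * Complex.exp (Complex.I * μ * Real.log |x|)
        - (1 - Complex.I * μ) * gm) =O[atBot] fun x => (-x) ^ (-(3:ℝ)/4) := by
  obtain ⟨L, hL⟩ := exists_integral_neg_sub_log_sub_isBigO hu hd hA
  set P := Complex.exp (2 * L + Complex.I * μ * Real.log c)
  have hw_deriv (x : ℝ) : HasDerivAt w (Complex.exp (2 * ∫ z in (0:ℝ)..(x / c), u z)) x := by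
    rw [funext hw]
    exact (hasDerivAt_integral_exp_integral_comp_div hu hc.ne' x).sub_const C
  have hlog : (fun t : ℝ => 2 * (∫ z in (0:ℝ)..(-t), u z) + Complex.I * μ * Real.log t - 2 * L)
      =O[atTop] (· ^ (-(3:ℝ)/4)) :=
    (hL.const_mul_left 2).congr_left fun t => by rw [hα]; ring
  have hw_asymp : (fun x : ℝ => deriv w x * Complex.exp (Complex.I * μ * Real.log |x|) - P)
      =O[atBot] fun x => (-x) ^ (-(3:ℝ)/4) := by
    simpa [Function.comp_def, (hw_deriv _).deriv, neg_div] using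
      (isBigO_exp_comp_div_mul_exp_log_sub (by norm_num) hc hlog).comp_tendsto
        tendsto_neg_atBot_atTop
  have hw_lim := tendsto_sub_nhds_zero_iff.1 <| hw_asymp.trans_tendsto <| by
    simpa [Function.comp_def, neg_div] using
      (tendsto_rpow_neg_atTop (y := 3 / 4) (by norm_num)).comp tendsto_neg_atBot_atTop
  refine ⟨P / (1 - Complex.I * μ), ?_, ?_⟩
  · refine (tendsto_exp_I_mul_log_abs_mul_div_atBot
      (.of_forall fun x => (hw_deriv x).differentiableAt.hasDerivAt) hw_lim).congr' ?_
    filter_upwards [eventually_ne_atBot 0] with x hx using (hg x hx).symm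
  · rwa [mul_div_cancel₀ _ (one_sub_I_mul_ofReal_ne_zero μ)]

/-- There exists `g₋` such that `g(x) → g₋` as `x → -∞` and
`w'(x) e^{iμ ln|x|} = (1-iμ) g₋ + O((-x)^{-3/4})` as `x → -∞`. -/
theorem stmt_12 (μ : ℝ) (α : ℂ) (hα : α = -Complex.I * μ / 2)
    (u : ℝ → ℂ) (hu : ContDiff ℝ (⊤ : ℕ∞) u)
    (hP : ∀ x : ℝ, deriv (deriv u) x = (x : ℂ) * u x + 2 * (u x) ^ 3 - α)
    (him : ∀ x : ℝ, (u x).re = 0)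
    (hAm : ∃ d : ℂ, d.re = 0 ∧ ∃ φ : ℝ, ∃ x₀ : ℝ, 0 < x₀ ∧ ∃ K : ℝ, 0 < K ∧
      ∀ x : ℝ, x ≤ -x₀ →
        ‖u x - α / x - d * (((-x) ^ (-(1:ℝ)/4) : ℝ) : ℂ) *
          Complex.sin (((2/3 * (-x) ^ ((3:ℝ)/2) : ℝ) : ℂ)
            - 3/4 * d ^ 2 * (Real.log (-x) : ℂ) + (φ : ℂ))‖
          ≤ K * (-x) ^ (-(7:ℝ)/4))
    (Cc : ℂ)
    (hC : Cc = (2 * cbrt3 / (1 - Complex.I * μ)) * (deriv u 0 - (u 0) ^ 2))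
    (w : ℝ → ℂ)
    (hw : ∀ x : ℝ, w x =
      (∫ y in (0:ℝ)..x, Complex.exp (((2 / cbrt3 : ℝ) : ℂ) *
        ∫ z in (0:ℝ)..y, u (z / cbrt3))) - Cc)
    (g : ℝ → ℂ)
    (hg : ∀ x : ℝ, x ≠ 0 →
      g x = Complex.exp (Complex.I * μ * Real.log |x|) * w x / x) :
    ∃ gm : ℂ, Filter.Tendsto g Filter.atBot (nhds gm) ∧
      ∃ x₁ : ℝ, 0 < x₁ ∧ ∃ K' : ℝ, 0 < K' ∧ ∀ x : ℝ, x ≤ -x₁ →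
        ‖deriv w x * Complex.exp (Complex.I * μ * Real.log |x|)
          - (1 - Complex.I * μ) * gm‖ ≤ K' * (-x) ^ (-(3:ℝ)/4) := by
  obtain ⟨d, hd, φ, hA⟩ := hAm
  simpa only [isBigO_atBot_neg_rpow_iff] using stmt_12_general μ α hα u hu.continuous d hd φ
    (isBigO_atBot_neg_rpow_iff.2 hA) cbrt3 (by unfold cbrt3; positivity) Cc w hw g hg
end

section
/- Let μ ∈ ℝ, set α := −iμ/2, and let u : ℝ → ℂ be a smooth solution of the PII equation u''(x) = x·u(x) + 2·u(x)³ − α on ℝ, taking purely imaginary values on ℝ and satisfying the asymptotic expansion (A−): there exist d ∈ iℝ, φ ∈ ℝ and x₀, K > 0 such that |u(x) − α/x − d·(−x)^{−1/4}·sin( (2/3)(−x)^{3/2} − (3/4)·d²·ln(−x) + φ )| ≤ K·(−x)^{−7/4} for all x ≤ −x₀. Define w(x) := ∫₀ˣ exp( (2/3^{1/3}) ∫₀^y u(z/3^{1/3}) dz ) dy − C with C := (2·3^{1/3}/(1−iμ))·(u'(0) − u(0)²), g(x) := e^{iμ·ln|x|}·w(x)/x for x ≠ 0, and let g₋ :=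 lim_{x→−∞} g(x) (which exists). Then |g₋| = (1+μ²)^{−1/2}, and g(x) − g₋ = O((−x)^{−3/2}) as x → −∞. -/
/-!
Write `F s = exp (2 ∫₀ˢ u)` and `v = u' - u²`. Painlevé II gives `v' = s u - α - 2 u v`, hence
`((s - 2 v) F)' = (1 + 2 α) F`, and the constant `C` is the one for which
`w (c s) = c (s - 2 v s) F s / (1 + 2 α)`, where `c = 3^{1/3}`. Thus `g (c s)` is a constant of
modulus `|1 + 2 α|⁻¹` times `G = H (1 - 2 v / s)`, where `H = |s|^{-2α} F` is unimodular because
`u` and `α` are purely imaginary.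

The only asymptotic input is `u = O((-s)^{-β})` with `0 < β ≤ 1`; the expansion (A−) gives
`β = 1/4`. One computes `G' = 2 (1 + 2 α) H v / s²`, and integrating the term `H u' / s²` by parts
leaves a derivative of order `(-s)^{-2-2β}`, so `G` converges at the rate `(-s)^{-1-2β}`. Moreover
`u = o(s)` and `u'' = s u + 2 u³ - α = o(s)` force `u' = o(s)` by Landau's interpolation argument
on unit intervals, so `v / s → 0` and the limit of `G` has modulus `1`.
-/

open Asymptotics Filter MeasureTheory Set Topology

section PowerDecay

variable {E : Type*} [NormedAddCommGroup E]

lemma isBigO_neg_rpow_atBot_of_le {p q : ℝ} (hpq : p ≤ q) :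
    (fun x : ℝ ↦ (-x) ^ p) =O[atBot] fun x : ℝ ↦ (-x) ^ q := by
  refine .of_norm_eventuallyLE ?_
  filter_upwards [eventually_le_atBot (-1)] with x hx
  rw [Real.norm_of_nonneg (Real.rpow_nonneg (by linarith) _)]
  exact Real.rpow_le_rpow_of_exponent_le (by linarith) hpq

lemma tendsto_neg_rpow_neg_atBot {p : ℝ} (hp : 0 < p) :
    Tendsto (fun x : ℝ ↦ (-x) ^ (-p)) atBot (𝓝 0) :=
  (tendsto_rpow_neg_atTop hp).comp tendsto_neg_atBot_atTop

lemma isBigO_neg_rpow_atBot_iff {f : ℝ → E} {p : ℝ} :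
    (f =O[atBot] fun x ↦ (-x) ^ p) ↔
      ∃ x₀ > 0, ∃ K > 0, ∀ x ≤ -x₀, ‖f x‖ ≤ K * (-x) ^ p := by
  have norm_rpow {x : ℝ} (hx : x ≤ 0) : ‖(-x) ^ p‖ = (-x) ^ p :=
    Real.norm_of_nonneg (Real.rpow_nonneg (neg_nonneg.2 hx) p)
  constructor
  · intro hf
    obtain ⟨K, hK, hbound⟩ := hf.exists_pos
    obtain ⟨a, ha⟩ := eventually_atBot.1 hbound.bound
    refine ⟨max 1 (-a), by positivity, K, hK, fun x hx ↦ ?_⟩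
    rw [← norm_rpow (by linarith [le_max_left 1 (-a)])]
    exact ha x (by linarith [le_max_right 1 (-a)])
  · rintro ⟨x₀, hx₀, K, -, hbound⟩
    refine .of_bound K ?_
    filter_upwards [eventually_le_atBot (-x₀)] with x hx
    rw [norm_rpow (by linarith)]
    exact hbound x hx

lemma isBigO_neg_rpow_atBot_comp_div {f : ℝ → E} {c p : ℝ} (hc : 0 < c)
    (hf : f =O[atBot] fun x ↦ (-x) ^ p) :
    (fun x ↦ f (x / c)) =O[atBot] fun x ↦ (-x) ^ p := by
  refine (hf.comp_tendsto (tendsto_id.atBot_div_const hc)).trans (.of_bound (c ^ (-p)) ?_)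
  filter_upwards [eventually_le_atBot 0] with x hx
  have hx' : 0 ≤ -x := neg_nonneg.2 hx
  simp only [Function.comp_apply, id_eq]
  rw [← neg_div, Real.div_rpow hx' hc.le, Real.rpow_neg hc.le, norm_div,
    Real.norm_of_nonneg (Real.rpow_nonneg hc.le p), div_eq_inv_mul]

lemma isBigO_pow_div_pow_atBot {u : ℝ → ℂ} {β p : ℝ} (hu : u =O[atBot] fun s ↦ (-s) ^ (-β))
    (n m : ℕ) (hp : p ≤ n * β + m) :
    (fun s ↦ u s ^ n / (s : ℂ) ^ m) =O[atBot] fun s ↦ (-s) ^ (-p) := by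
  have hs : (fun s : ℝ ↦ ((s : ℂ) ^ m)⁻¹) =O[atBot] fun s : ℝ ↦ ((-s) ^ m)⁻¹ :=
    .of_bound 1 (by simp)
  refine (((hu.pow n).mul hs).congr' .rfl ?_).trans
    (isBigO_neg_rpow_atBot_of_le (neg_le_neg hp))
  filter_upwards [eventually_lt_atBot 0] with s hs
  have hs' : 0 < -s := neg_pos.2 hs
  rw [neg_add, Real.rpow_add hs', Real.rpow_neg hs'.le m, Real.rpow_natCast,
    ← Real.rpow_mul_natCast hs'.le, mul_comm (n : ℝ), neg_mul]

lemma integral_Iic_neg_rpow {p a : ℝ} (hp : 0 < p) (ha : a < 0) :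
    ∫ x in Iic a, (-x) ^ (-(p + 1)) = (-a) ^ (-p) / p := by
  rw [integral_comp_neg_Iic a fun x : ℝ ↦ x ^ (-(p + 1)),
    integral_Ioi_rpow_of_lt (by linarith) (by linarith)]
  rw [show -(p + 1) + 1 = -p by ring, neg_div_neg_eq]

lemma integrableOn_Iic_neg_rpow {p a : ℝ} (hp : 0 < p) (ha : a < 0) :
    IntegrableOn (fun x : ℝ ↦ (-x) ^ (-(p + 1))) (Iic a) := by
  rw [integrableOn_Iic_iff_integrableOn_Iio]
  exact (integrableOn_Ioi_rpow_of_lt (by linarith) (by linarith)).comp_neg_Iio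

variable [NormedSpace ℝ E]

theorem exists_tendsto_isBigO_sub_of_deriv_isBigO [CompleteSpace E] {f f' : ℝ → E} {p : ℝ}
    (hp : 0 < p) (hf : ∀ᶠ x in atBot, HasDerivAt f (f' x) x)
    (hf' : f' =O[atBot] fun x ↦ (-x) ^ (-(p + 1))) :
    ∃ L, Tendsto f atBot (𝓝 L) ∧ (fun x ↦ f x - L) =O[atBot] fun x ↦ (-x) ^ (-p) := by
  obtain ⟨x₀, hx₀, K, -, hbound⟩ := isBigO_neg_rpow_atBot_iff.1 hf'
  obtain ⟨a, ha⟩ := eventually_atBot.1 (hf.and (eventually_le_atBot (-x₀)))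
  have integrable_bound {x : ℝ} (hx : x ≤ a) :
      IntegrableOn (fun y : ℝ ↦ K * (-y) ^ (-(p + 1))) (Iic x) :=
    (integrableOn_Iic_neg_rpow hp (by linarith [(ha x hx).2])).const_mul K
  have norm_le {x : ℝ} (hx : x ≤ a) :
      ∀ᵐ y ∂volume.restrict (Iic x), ‖f' y‖ ≤ K * (-y) ^ (-(p + 1)) :=
    (ae_restrict_mem measurableSet_Iic).mono fun y hy ↦ hbound y (ha y (hy.trans hx)).2
  have integrable {x : ℝ} (hx : x ≤ a) : IntegrableOn f' (Iic x) := by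
    refine (integrable_bound hx).mono' ?_ (norm_le hx)
    refine (aestronglyMeasurable_deriv f _).congr ?_
    exact (ae_restrict_mem measurableSet_Iic).mono fun y hy ↦ (ha y (hy.trans hx)).1.deriv
  have hL := tendsto_limUnder_of_hasDerivAt_of_integrableOn_Iic
    (fun y hy ↦ (ha y hy).1) (integrable le_rfl)
  refine ⟨_, hL, .of_bound (K / p) ?_⟩
  filter_upwards [eventually_le_atBot a] with x hx
  have hx' : x < 0 := by linarith [(ha x hx).2]
  rw [← integral_Iic_of_hasDerivAt_of_tendsto' (fun y hy ↦ (ha y (hy.trans hx)).1)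
    (integrable hx) hL, Real.norm_of_nonneg (Real.rpow_nonneg (by linarith) _)]
  calc ‖∫ y in Iic x, f' y‖ ≤ ∫ y in Iic x, K * (-y) ^ (-(p + 1)) :=
        norm_integral_le_of_norm_le (integrable_bound hx) (norm_le hx)
    _ = K / p * (-x) ^ (-p) := by
        rw [integral_const_mul, integral_Iic_neg_rpow hp hx', mul_div_assoc', div_mul_eq_mul_div]

lemma sub_mul_norm_deriv_le {f f' f'' : ℝ → E} {a b A B : ℝ} (hab : a ≤ b)
    (hf : ∀ x ∈ Icc a b, HasDerivAt f (f' x) x) (hf' : ∀ x ∈ Icc a b, HasDerivAt f' (f'' x) x)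
    (hA : ∀ x ∈ Icc a b, ‖f x‖ ≤ A) (hB : ∀ x ∈ Icc a b, ‖f'' x‖ ≤ B) :
    (b - a) * ‖f' b‖ ≤ 2 * A + B * (b - a) ^ 2 := by
  have ha : a ∈ Icc a b := left_mem_Icc.2 hab
  have hb : b ∈ Icc a b := right_mem_Icc.2 hab
  have deriv_close : ∀ x ∈ Icc a b, ‖f' x - f' b‖ ≤ B * (b - a) := fun x hx ↦ by
    refine ((convex_Icc a b).norm_image_sub_le_of_norm_hasDerivWithin_le
      (fun y hy ↦ (hf' y hy).hasDerivWithinAt) hB hb hx).trans ?_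
    rw [Real.norm_eq_abs, abs_sub_comm, abs_of_nonneg (sub_nonneg.2 hx.2)]
    have := (norm_nonneg _).trans (hB x hx)
    gcongr
    exact hx.1
  have taylor : ‖(f b - b • f' b) - (f a - a • f' b)‖ ≤ B * (b - a) * ‖b - a‖ :=
    (convex_Icc a b).norm_image_sub_le_of_norm_hasDerivWithin_le
      (f := fun x ↦ f x - x • f' b) (f' := fun x ↦ f' x - f' b)
      (fun x hx ↦ by
        simpa using ((hf x hx).fun_sub ((hasDerivAt_id x).smul_const (f' b))).hasDerivWithinAt)
      deriv_close ha hb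
  calc (b - a) * ‖f' b‖ = ‖(b - a) • f' b‖ := by
        rw [norm_smul, Real.norm_of_nonneg (sub_nonneg.2 hab)]
    _ = ‖f b - f a - ((f b - b • f' b) - (f a - a • f' b))‖ := by
        congr 1
        module
    _ ≤ ‖f b‖ + ‖f a‖ + ‖(f b - b • f' b) - (f a - a • f' b)‖ := by
        grw [norm_sub_le, norm_sub_le (f b) (f a)]
    _ ≤ 2 * A + B * (b - a) ^ 2 := by
        rw [Real.norm_of_nonneg (sub_nonneg.2 hab)] at taylor
        linarith [hA a ha, hA b hb]

theorem isLittleO_deriv_atBot {f f' f'' : ℝ → E} (hf : ∀ᶠ x in atBot, HasDerivAt f (f' x) x)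
    (hf' : ∀ᶠ x in atBot, HasDerivAt f' (f'' x) x) (hf₀ : f =o[atBot] fun x ↦ x)
    (hf₂ : f'' =o[atBot] fun x ↦ x) : f' =o[atBot] fun x ↦ x := by
  refine isLittleO_iff.2 fun ε hε ↦ ?_
  have hε' : 0 < ε / 6 := by positivity
  obtain ⟨a, ha⟩ := eventually_atBot.1
    ((hf.and hf').and ((isLittleO_iff.1 hf₀ hε').and (isLittleO_iff.1 hf₂ hε')))
  filter_upwards [eventually_le_atBot (min a (-1))] with s hs
  have hsa : s ≤ a := hs.trans (min_le_left _ _)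
  have hs1 : s ≤ -1 := hs.trans (min_le_right _ _)
  have abs_le : ∀ x ∈ Icc (s - 1) s, ε / 6 * ‖x‖ ≤ ε / 6 * (2 * ‖s‖) := fun x hx ↦ by
    gcongr
    rw [Real.norm_of_nonpos (by linarith [hx.2]), Real.norm_of_nonpos (by linarith)]
    linarith [hx.1]
  have key := sub_mul_norm_deriv_le (sub_one_lt s).le
    (fun x hx ↦ (ha x (hx.2.trans hsa)).1.1) (fun x hx ↦ (ha x (hx.2.trans hsa)).1.2)
    (fun x hx ↦ (ha x (hx.2.trans hsa)).2.1.trans (abs_le x hx))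
    (fun x hx ↦ (ha x (hx.2.trans hsa)).2.2.trans (abs_le x hx))
  linarith

end PowerDecay

/-- The Painlevé II equation `u'' = x u + 2 u³ - α` on the real line. -/
structure IsPainleveII (α : ℂ) (u : ℝ → ℂ) : Prop where
  contDiff : ContDiff ℝ 2 u
  deriv_deriv : ∀ x : ℝ, deriv (deriv u) x = x * u x + 2 * u x ^ 3 - α

/-- The Miura transform `u' - u²` of `u`. -/
noncomputable def miura (u : ℝ → ℂ) (s : ℝ) : ℂ := deriv u s - u s ^ 2

/-- The solution `exp (2 ∫₀ˢ u)` of `F' = 2 u F`, `F 0 = 1`; up to the rescaling of the variable it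
is the integrand defining `w`. -/
noncomputable def expIntegral (u : ℝ → ℂ) (s : ℝ) : ℂ := Complex.exp (2 * ∫ t in (0 : ℝ)..s, u t)

/-- The product of `expIntegral u s` with `|s| ^ (-2α)`, the latter written as an exponential. -/
noncomputable def twistedExp (α : ℂ) (u : ℝ → ℂ) (s : ℝ) : ℂ :=
  Complex.exp (-2 * α * Real.log |s|) * expIntegral u s

/-- The function `g`, up to a constant factor and a rescaling of the variable. -/
noncomputable def amplitude (α : ℂ) (u : ℝ → ℂ) (s : ℝ) : ℂ :=
  twistedExp α u s * (1 - 2 * miura u s / s)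

/-- The amplitude minus the boundary term of an integration by parts, which removes `u'` from its
derivative. -/
noncomputable def correctedAmplitude (α : ℂ) (u : ℝ → ℂ) (s : ℝ) : ℂ :=
  amplitude α u s - 2 * (1 + 2 * α) * (twistedExp α u s * (u s / (s : ℂ) ^ 2))

section Exponentials

variable {α : ℂ} {u : ℝ → ℂ}

lemma hasDerivAt_expIntegral (hu : Continuous u) (s : ℝ) :
    HasDerivAt (expIntegral u) (expIntegral u s * (2 * u s)) s :=
  ((hu.integral_hasStrictDerivAt 0 s).hasDerivAt.const_mul 2).cexp

lemma hasDerivAt_twistedExp (α : ℂ) (hu : Continuous u) {s : ℝ} (hs : s ≠ 0) :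
    HasDerivAt (twistedExp α u) (twistedExp α u s * (2 * u s - 2 * α / s)) s := by
  have hlog : HasDerivAt (fun s : ℝ ↦ ((Real.log |s| : ℝ) : ℂ)) ((s⁻¹ : ℝ) : ℂ) s := by
    simpa only [Real.log_abs] using (Real.hasDerivAt_log hs).ofReal_comp
  refine ((hlog.const_mul (-2 * α)).cexp.mul (hasDerivAt_expIntegral hu s)).congr_deriv ?_
  rw [twistedExp]
  push_cast
  ring

lemma norm_expIntegral (hu : Continuous u) (him : ∀ s, (u s).re = 0) (s : ℝ) :
    ‖expIntegral u s‖ = 1 := by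
  have hre : (∫ t in (0 : ℝ)..s, u t).re = 0 := by
    simpa [him] using (intervalIntegral.intervalIntegral_re (𝕜 := ℂ) (μ := volume)
      (hu.intervalIntegrable 0 s)).symm
  simp [expIntegral, Complex.norm_exp, hre]

lemma norm_twistedExp (hα : α.re = 0) (hu : Continuous u) (him : ∀ s, (u s).re = 0) (s : ℝ) :
    ‖twistedExp α u s‖ = 1 := by
  simp [twistedExp, norm_expIntegral hu him, Complex.norm_exp, hα]

lemma norm_amplitude (hα : α.re = 0) (hu : Continuous u) (him : ∀ s, (u s).re = 0) (s : ℝ) :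
    ‖amplitude α u s‖ = ‖1 - 2 * miura u s / s‖ := by
  rw [amplitude, norm_mul, norm_twistedExp hα hu him, one_mul]

lemma isBigO_twistedExp_mul {f : ℝ → ℂ} {g : ℝ → ℝ} {l : Filter ℝ} (hα : α.re = 0)
    (hu : Continuous u) (him : ∀ s, (u s).re = 0) (hf : f =O[l] g) :
    (fun s ↦ twistedExp α u s * f s) =O[l] g := by
  refine (hf.norm_left.congr_left fun s ↦ ?_).of_norm_left
  rw [norm_mul, norm_twistedExp hα hu him, one_mul]

lemma integral_exp_integral_comp_div (u : ℝ → ℂ) {c : ℝ} (hc : c ≠ 0) (x : ℝ) :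
    (∫ y in (0 : ℝ)..x, Complex.exp ((2 / c : ℝ) * ∫ z in (0 : ℝ)..y, u (z / c))) =
      c * ∫ t in (0 : ℝ)..x / c, expIntegral u t := by
  have integrand (y : ℝ) : Complex.exp ((2 / c : ℝ) * ∫ z in (0 : ℝ)..y, u (z / c)) =
      expIntegral u (y / c) := by
    have hc' : (c : ℂ) ≠ 0 := mod_cast hc
    rw [intervalIntegral.integral_comp_div _ hc, zero_div, expIntegral, Complex.real_smul]
    push_cast
    field_simp
  simp only [integrand]
  rw [intervalIntegral.integral_comp_div _ hc, zero_div, Complex.real_smul]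

end Exponentials

namespace IsPainleveII

variable {α : ℂ} {u : ℝ → ℂ} {β : ℝ}

lemma continuous (h : IsPainleveII α u) : Continuous u := h.contDiff.continuous

lemma hasDerivAt (h : IsPainleveII α u) (s : ℝ) : HasDerivAt u (deriv u s) s :=
  (h.contDiff.differentiable two_ne_zero s).hasDerivAt

lemma hasDerivAt_deriv (h : IsPainleveII α u) (s : ℝ) :
    HasDerivAt (deriv u) (s * u s + 2 * u s ^ 3 - α) s := by
  rw [← h.deriv_deriv]
  exact (h.contDiff.differentiable_deriv_two s).hasDerivAt

lemma hasDerivAt_miura (h : IsPainleveII α u) (s : ℝ) :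
    HasDerivAt (miura u) (s * u s - α - 2 * u s * miura u s) s := by
  refine ((h.hasDerivAt_deriv s).sub ((h.hasDerivAt s).pow 2)).congr_deriv ?_
  rw [miura]
  ring

lemma integral_expIntegral (h : IsPainleveII α u) (s : ℝ) :
    (1 + 2 * α) * ∫ t in (0 : ℝ)..s, expIntegral u t =
      (s - 2 * miura u s) * expIntegral u s + 2 * miura u 0 := by
  have primitive (t : ℝ) : HasDerivAt (fun t : ℝ ↦ (t - 2 * miura u t) * expIntegral u t)
      ((1 + 2 * α) * expIntegral u t) t := by
    refine (((hasDerivAt_id t).ofReal_comp.sub ((h.hasDerivAt_miura t).const_mul 2)).mul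
      (hasDerivAt_expIntegral h.continuous t)).congr_deriv ?_
    simp only [id, Pi.sub_apply, Complex.ofReal_one]
    ring
  have cont : Continuous (expIntegral u) :=
    continuous_iff_continuousAt.2 fun t ↦ (hasDerivAt_expIntegral h.continuous t).continuousAt
  rw [← intervalIntegral.integral_const_mul,
    intervalIntegral.integral_eq_sub_of_hasDerivAt (fun t _ ↦ primitive t)
      ((continuous_const.mul cont).intervalIntegrable _ _)]
  simp [expIntegral]

lemma exp_mul_integral_exp_sub_div_eq_amplitude (h : IsPainleveII α u) (hα : 1 + 2 * α ≠ 0)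
    {c x : ℝ} (hc : c ≠ 0) (hx : x ≠ 0) :
    Complex.exp (-2 * α * Real.log |x|) *
        ((∫ y in (0 : ℝ)..x, Complex.exp ((2 / c : ℝ) * ∫ z in (0 : ℝ)..y, u (z / c))) -
          2 * c / (1 + 2 * α) * miura u 0) / x =
      Complex.exp (-2 * α * Real.log |c|) / (1 + 2 * α) * amplitude α u (x / c) := by
  have hc' : (c : ℂ) ≠ 0 := mod_cast hc
  have hx' : (x : ℂ) ≠ 0 := mod_cast hx
  have hlog : Complex.exp (-2 * α * Real.log |x|) =
      Complex.exp (-2 * α * Real.log |c|) * Complex.exp (-2 * α * Real.log |x / c|) := by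
    rw [← Complex.exp_add, ← mul_add, ← Complex.ofReal_add, abs_div,
      Real.log_div (abs_ne_zero.2 hx) (abs_ne_zero.2 hc), add_sub_cancel]
  rw [integral_exp_integral_comp_div u hc, eq_div_of_mul_eq hα ((mul_comm _ _).trans
    (h.integral_expIntegral (x / c))), hlog, amplitude, twistedExp]
  push_cast
  field_simp
  ring

lemma hasDerivAt_correctedAmplitude (h : IsPainleveII α u) {s : ℝ} (hs : s ≠ 0) :
    HasDerivAt (correctedAmplitude α u)
      (2 * (1 + 2 * α) * (twistedExp α u s *
        ((2 * α + 2) * (u s / (s : ℂ) ^ 3) - 3 * (u s ^ 2 / (s : ℂ) ^ 2)))) s := by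
  have hs' : (s : ℂ) ≠ 0 := mod_cast hs
  have hid : HasDerivAt (fun s : ℝ ↦ (s : ℂ)) 1 s := (hasDerivAt_id s).ofReal_comp
  have hH := hasDerivAt_twistedExp α h.continuous hs
  have hG := hH.mul ((((h.hasDerivAt_miura s).const_mul 2).div hid hs').const_sub 1)
  have hB := (hH.mul ((h.hasDerivAt s).div (hid.pow 2) (pow_ne_zero 2 hs'))).const_mul
    (2 * (1 + 2 * α))
  refine (hG.sub hB).congr_deriv ?_
  simp only [Pi.div_apply, Pi.pow_apply, miura]
  field_simp
  ring

lemma tendsto_miura_div (h : IsPainleveII α u) (hu : Tendsto u atBot (𝓝 0)) :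
    Tendsto (fun s : ℝ ↦ miura u s / s) atBot (𝓝 0) := by
  have isLittleO_of_tendsto {f : ℝ → ℂ} {z : ℂ} (hf : Tendsto f atBot (𝓝 z)) :
      f =o[atBot] fun s : ℝ ↦ s :=
    (hf.isBigO_one ℂ).trans_isLittleO (isLittleO_const_id_atBot 1)
  have linear : (fun s : ℝ ↦ (s : ℂ) * u s) =o[atBot] fun s ↦ s := by
    simpa using (Complex.isBigO_ofReal_left.2 (isBigO_refl (fun s : ℝ ↦ s) atBot)).mul_isLittleO
      ((isLittleO_one_iff ℝ).2 hu)
  have second : (fun s : ℝ ↦ s * u s + 2 * u s ^ 3 - α) =o[atBot] fun s ↦ s :=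
    (linear.add (isLittleO_of_tendsto ((hu.pow 3).const_mul 2))).sub
      (isLittleO_const_id_atBot α)
  have first : deriv u =o[atBot] fun s : ℝ ↦ s :=
    isLittleO_deriv_atBot (.of_forall h.hasDerivAt) (.of_forall h.hasDerivAt_deriv)
      (isLittleO_of_tendsto hu) second
  exact (Complex.isLittleO_ofReal_right.2
    (first.sub (isLittleO_of_tendsto (hu.pow 2)))).tendsto_div_nhds_zero

lemma tendsto_norm_amplitude (h : IsPainleveII α u) (hα : α.re = 0) (him : ∀ s, (u s).re = 0)
    (hu : Tendsto u atBot (𝓝 0)) : Tendsto (fun s ↦ ‖amplitude α u s‖) atBot (𝓝 1) := by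
  simpa [norm_amplitude hα h.continuous him, mul_div_assoc] using
    (((h.tendsto_miura_div hu).const_mul 2).const_sub 1).norm

/-- The rate comes from the term `u² / s²` of the derivative; the bound `β ≤ 1` makes the remaining
terms at most as large. -/
theorem exists_tendsto_amplitude (h : IsPainleveII α u) (hα : α.re = 0)
    (him : ∀ s, (u s).re = 0) (hβ₀ : 0 < β) (hβ₁ : β ≤ 1)
    (hu : u =O[atBot] fun s ↦ (-s) ^ (-β)) :
    ∃ L, Tendsto (amplitude α u) atBot (𝓝 L) ∧ ‖L‖ = 1 ∧
      (fun s ↦ amplitude α u s - L) =O[atBot] fun s ↦ (-s) ^ (-(1 + 2 * β)) := by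
  have isBigO_mul {f : ℝ → ℂ} {g : ℝ → ℝ} (hf : f =O[atBot] g) :
      (fun s ↦ 2 * (1 + 2 * α) * (twistedExp α u s * f s)) =O[atBot] g :=
    (isBigO_twistedExp_mul hα h.continuous him hf).const_mul_left _
  have boundary : (fun s ↦ amplitude α u s - correctedAmplitude α u s) =O[atBot]
      fun s ↦ (-s) ^ (-(1 + 2 * β)) := by
    have := isBigO_pow_div_pow_atBot (p := 1 + 2 * β) hu 1 2 (by push_cast; linarith)
    simpa [correctedAmplitude] using isBigO_mul this
  have deriv_bound := isBigO_mul <|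
    ((isBigO_pow_div_pow_atBot (p := 1 + 2 * β + 1) hu 1 3 (by push_cast; linarith)).const_mul_left
      (2 * α + 2)).sub
    ((isBigO_pow_div_pow_atBot (p := 1 + 2 * β + 1) hu 2 2 (by push_cast; linarith)).const_mul_left
      3)
  simp only [pow_one] at deriv_bound
  obtain ⟨L, -, hrate⟩ := exists_tendsto_isBigO_sub_of_deriv_isBigO (by positivity)
    ((eventually_ne_atBot 0).mono fun s hs ↦ h.hasDerivAt_correctedAmplitude hs) deriv_bound
  have rate : (fun s ↦ amplitude α u s - L) =O[atBot] fun s ↦ (-s) ^ (-(1 + 2 * β)) := by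
    simpa using boundary.add hrate
  have limit : Tendsto (amplitude α u) atBot (𝓝 L) := tendsto_sub_nhds_zero_iff.1 <|
    rate.trans_tendsto (tendsto_neg_rpow_neg_atBot (by positivity))
  exact ⟨L, limit, tendsto_nhds_unique limit.norm (h.tendsto_norm_amplitude hα him
    (hu.trans_tendsto (tendsto_neg_rpow_neg_atBot hβ₀))), rate⟩

end IsPainleveII

section Expansion

lemma isBigO_of_oscillatory_expansion {u : ℝ → ℂ} {α d : ℂ} {θ : ℝ → ℂ} {β r : ℝ} (hβ : β ≤ 1)
    (hr : β ≤ r) (hθ : ∀ x, (θ x).im = 0)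
    (h : (fun x : ℝ ↦ u x - α / x - d * ((-x) ^ (-β) : ℝ) * Complex.sin (θ x)) =O[atBot]
      fun x ↦ (-x) ^ (-r)) :
    u =O[atBot] fun x ↦ (-x) ^ (-β) := by
  have remainder := h.trans (isBigO_neg_rpow_atBot_of_le (neg_le_neg hr))
  have pole : (fun x : ℝ ↦ α / x) =O[atBot] fun x ↦ (-x) ^ (-β) := by
    have const : (fun _ : ℝ ↦ α) =O[atBot] fun x : ℝ ↦ (-x) ^ (-(0 : ℝ)) := by
      simpa using isBigO_const_const α (one_ne_zero (α := ℝ)) atBot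
    simpa using isBigO_pow_div_pow_atBot (p := β) const 1 1 (by simpa using hβ)
  have oscillation : (fun x : ℝ ↦ d * ((-x) ^ (-β) : ℝ) * Complex.sin (θ x)) =O[atBot]
      fun x ↦ (-x) ^ (-β) := by
    refine .of_bound ‖d‖ (.of_forall fun x ↦ ?_)
    rw [norm_mul, norm_mul, Complex.norm_real, ← Complex.re_add_im (θ x), hθ, Complex.ofReal_zero,
      zero_mul, add_zero, ← Complex.ofReal_sin, Complex.norm_real]
    exact mul_le_of_le_one_right (by positivity) (Real.abs_sin_le_one _)
  simpa using (remainder.add oscillation).add pole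

end Expansion

lemma cbrt3_pos : 0 < cbrt3 := Real.rpow_pos_of_pos three_pos _

lemma norm_one_sub_I_mul_ofReal (μ : ℝ) : ‖1 - Complex.I * μ‖ = (1 + μ ^ 2) ^ ((1 : ℝ) / 2) := by
  have := Complex.norm_add_mul_I 1 (-μ)
  rw [← Real.sqrt_eq_rpow]
  simpa [sub_eq_add_neg, mul_comm] using this

theorem stmt_13_general {β c : ℝ} (hβ₀ : 0 < β) (hβ₁ : β ≤ 1) (hc : 0 < c)
    (μ : ℝ) (α : ℂ) (hα : α = -Complex.I * μ / 2) (u : ℝ → ℂ) (hu : IsPainleveII α u)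
    (him : ∀ x : ℝ, (u x).re = 0) (hdecay : u =O[atBot] fun x ↦ (-x) ^ (-β))
    (Cc : ℂ) (hC : Cc = (2 * c / (1 - Complex.I * μ)) * miura u 0)
    (w : ℝ → ℂ)
    (hw : ∀ x : ℝ, w x =
      (∫ y in (0 : ℝ)..x, Complex.exp ((2 / c : ℝ) * ∫ z in (0 : ℝ)..y, u (z / c))) - Cc)
    (g : ℝ → ℂ)
    (hg : ∀ x : ℝ, x ≠ 0 → g x = Complex.exp (Complex.I * μ * Real.log |x|) * w x / x) :
    ∃ gm, Tendsto g atBot (𝓝 gm) ∧ ‖gm‖ = (1 + μ ^ 2) ^ (-(1 : ℝ) / 2) ∧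
      (fun x ↦ g x - gm) =O[atBot] fun x ↦ (-x) ^ (-(1 + 2 * β)) := by
  have hαre : α.re = 0 := by simp [hα]
  have hμα : 1 - Complex.I * μ = 1 + 2 * α := by rw [hα]; ring
  have hIμ : Complex.I * μ = -2 * α := by rw [hα]; ring
  have hne : 1 + 2 * α ≠ 0 := fun h ↦ by simpa [hαre] using congrArg Complex.re h
  obtain ⟨L, hL, hnorm, hrate⟩ := hu.exists_tendsto_amplitude hαre him hβ₀ hβ₁ hdecay
  set A := Complex.exp (-2 * α * Real.log |c|) / (1 + 2 * α) with hA
  have hgA : g =ᶠ[atBot] fun x ↦ A * amplitude α u (x / c) := by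
    filter_upwards [eventually_ne_atBot 0] with x hx
    rw [hg x hx, hw, hC, hμα, hIμ, hA, hu.exp_mul_integral_exp_sub_div_eq_amplitude hne hc.ne' hx]
  refine ⟨A * L, ?_, ?_, ?_⟩
  · exact ((hL.comp (tendsto_id.atBot_div_const hc)).const_mul A).congr' hgA.symm
  · have hAnorm : ‖A‖ = (1 + μ ^ 2) ^ (-(1 : ℝ) / 2) := by
      rw [hA, ← hμα, norm_div, norm_one_sub_I_mul_ofReal, Complex.norm_exp, neg_div,
        Real.rpow_neg (by positivity)]
      simp [hαre]
    rw [norm_mul, hnorm, mul_one, hAnorm]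
  · refine ((isBigO_neg_rpow_atBot_comp_div hc hrate).const_mul_left A).congr' ?_ .rfl
    filter_upwards [hgA] with x hx
    rw [hx, mul_sub]

/-- With `g₋ = lim_{x→-∞} g(x)`, one has `|g₋| = (1+μ²)^{-1/2}` and
`g(x) - g₋ = O((-x)^{-3/2})` as `x → -∞`. -/
theorem stmt_13 (μ : ℝ) (α : ℂ) (hα : α = -Complex.I * μ / 2)
    (u : ℝ → ℂ) (hu : ContDiff ℝ (⊤ : ℕ∞) u)
    (hP : ∀ x : ℝ, deriv (deriv u) x = (x : ℂ) * u x + 2 * (u x) ^ 3 - α)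
    (him : ∀ x : ℝ, (u x).re = 0)
    (hAm : ∃ d : ℂ, d.re = 0 ∧ ∃ φ : ℝ, ∃ x₀ : ℝ, 0 < x₀ ∧ ∃ K : ℝ, 0 < K ∧
      ∀ x : ℝ, x ≤ -x₀ →
        ‖u x - α / x - d * (((-x) ^ (-(1:ℝ)/4) : ℝ) : ℂ) *
          Complex.sin (((2/3 * (-x) ^ ((3:ℝ)/2) : ℝ) : ℂ)
            - 3/4 * d ^ 2 * (Real.log (-x) : ℂ) + (φ : ℂ))‖
          ≤ K * (-x) ^ (-(7:ℝ)/4))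
    (Cc : ℂ)
    (hC : Cc = (2 * cbrt3 / (1 - Complex.I * μ)) * (deriv u 0 - (u 0) ^ 2))
    (w : ℝ → ℂ)
    (hw : ∀ x : ℝ, w x =
      (∫ y in (0:ℝ)..x, Complex.exp (((2 / cbrt3 : ℝ) : ℂ) *
        ∫ z in (0:ℝ)..y, u (z / cbrt3))) - Cc)
    (g : ℝ → ℂ)
    (hg : ∀ x : ℝ, x ≠ 0 →
      g x = Complex.exp (Complex.I * μ * Real.log |x|) * w x / x)
    (gm : ℂ) (hgm : Filter.Tendsto g Filter.atBot (nhds gm)) :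
    ‖gm‖ = (1 + μ ^ 2) ^ (-(1:ℝ)/2) ∧
    ∃ x₁ : ℝ, 0 < x₁ ∧ ∃ K' : ℝ, 0 < K' ∧ ∀ x : ℝ, x ≤ -x₁ →
      ‖g x - gm‖ ≤ K' * (-x) ^ (-(3:ℝ)/2) := by
  have hdecay : u =O[atBot] fun x ↦ (-x) ^ (-(1 / 4) : ℝ) := by
    obtain ⟨d, hd, φ, hexp⟩ := hAm
    have hremainder := isBigO_neg_rpow_atBot_iff.2 hexp
    simp only [neg_div] at hremainder
    exact isBigO_of_oscillatory_expansion (by norm_num) (by norm_num) (by simp [hd, sq]) hremainder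
  obtain ⟨L, hL, hnorm, hrate⟩ := stmt_13_general (by norm_num) (by norm_num) cbrt3_pos μ α hα u
    ⟨hu.of_le (by norm_cast), hP⟩ him hdecay Cc hC w hw g hg
  obtain rfl := tendsto_nhds_unique hgm hL
  exact ⟨hnorm, isBigO_neg_rpow_atBot_iff.1 (by norm_num at hrate ⊢; exact hrate)⟩
end
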